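/- arXiv:2301.01632 — 3 statements merged into one kernel-verified Lean document; each statement's English description precedes it below -/
import Mathlib

section
/- Let d ≥ 2, let κ > 1, let μ be a finite measure on ℝ supported on [1,∞), and let μ_κ := μ + Σ_{i=1}^∞ 𝒯_{κ^i}(μ|_{[1,κ]}). Then for every integer j ≥ 1, 𝒯_{κ^j}(μ_κ|_{(0,κ^j]}) = 𝒯_{κ^j}(μ|_{[1,κ^j]}) + Σ_{k=j+1}^∞ 𝒯_{κ^k}(μ|_{[1,κ]}). -/
open MeasureTheory

/-- The scaling operator `𝒯_m ν := m^d • (pushforward of ν under r ↦ r/m)`. -/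
noncomputable def scaleMeasure (d : ℕ) (m : ℝ) (ν : Measure ℝ) : Measure ℝ :=
  (ENNReal.ofReal m) ^ d • Measure.map (fun r : ℝ => r / m) ν

/-- The multiscale radius distribution `μ_κ := μ + Σ_{i=1}^∞ 𝒯_{κ^i}(μ|_{[1,κ]})`. -/
noncomputable def multiscaleMeasure (d : ℕ) (κ : ℝ) (μ : Measure ℝ) : Measure ℝ :=
  μ + Measure.sum (fun i : ℕ => scaleMeasure d (κ ^ (i + 1)) (μ.restrict (Set.Icc 1 κ)))

/-! Every scaled copy `𝒯_{κ^i}(μ|_{[1,κ]})` with `i ≥ 1` already lives on `(0,1]`, so restricting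
`μ_κ` to `(0,κ^j]` cuts only the summand `μ`, and `𝒯` turns the remaining series into its tail
because `𝒯_m ∘ 𝒯_n = 𝒯_{mn}`. -/

open Set

theorem restrict_Ioc_eq_restrict_Icc {α : Type*} [LinearOrder α] [MeasurableSpace α]
    {μ : Measure α} {a b : α} (hab : a < b) (hμ : μ (Ioo a b) = 0) (c : α) :
    μ.restrict (Ioc a c) = μ.restrict (Icc b c) := by
  refine Measure.restrict_congr_set (Filter.eventuallyEq_set.mpr ?_)
  filter_upwards [measure_eq_zero_iff_ae_notMem.mp hμ] with x hx
  have lt_iff_le : a < x ↔ b ≤ x := ⟨fun h => not_lt.mp fun hxb => hx ⟨h, hxb⟩, hab.trans_le⟩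
  exact and_congr_left fun _ => lt_iff_le

theorem mapsTo_div_Ioc {m b c : ℝ} (hm : 0 < m) (hbc : b ≤ c * m) :
    MapsTo (· / m) (Ioc 0 b) (Ioc 0 c) :=
  fun _ hr => ⟨div_pos hr.1 hm, (div_le_iff₀ hm).mpr (hr.2.trans hbc)⟩

section scaleMeasure

variable (d : ℕ) (m : ℝ)

theorem scaleMeasure_add (ν₁ ν₂ : Measure ℝ) :
    scaleMeasure d m (ν₁ + ν₂) = scaleMeasure d m ν₁ + scaleMeasure d m ν₂ := by
  simp only [scaleMeasure]
  rw [Measure.map_add _ _ (by fun_prop), smul_add]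

theorem scaleMeasure_sum {ι : Type*} (ν : ι → Measure ℝ) :
    scaleMeasure d m (Measure.sum ν) = Measure.sum fun i => scaleMeasure d m (ν i) := by
  have hdiv : Measurable fun r : ℝ => r / m := measurable_id.div_const m
  ext s hs
  simp only [scaleMeasure, Measure.smul_apply, Measure.map_apply hdiv hs,
    Measure.sum_apply _ hs, Measure.sum_apply _ (hdiv hs), smul_eq_mul, ENNReal.tsum_mul_left]

theorem scaleMeasure_scaleMeasure {m : ℝ} (hm : 0 ≤ m) (n : ℝ) (ν : Measure ℝ) :
    scaleMeasure d m (scaleMeasure d n ν) = scaleMeasure d (m * n) ν := by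
  have comp_div : (fun r : ℝ => r / m) ∘ (fun r => r / n) = fun r => r / (m * n) :=
    funext fun r => by rw [Function.comp_apply, div_div, mul_comm]
  rw [scaleMeasure, scaleMeasure, Measure.map_smul, Measure.map_map (by fun_prop) (by fun_prop),
    comp_div, smul_smul, ← mul_pow, ← ENNReal.ofReal_mul hm, scaleMeasure]

theorem restrict_scaleMeasure_restrict_of_mapsTo {m : ℝ} {s t : Set ℝ} (ht : MeasurableSet t)
    (hst : MapsTo (· / m) s t) (ν : Measure ℝ) :
    (scaleMeasure d m (ν.restrict s)).restrict t = scaleMeasure d m (ν.restrict s) := by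
  have hdiv : Measurable fun r : ℝ => r / m := measurable_id.div_const m
  rw [scaleMeasure, Measure.restrict_smul, Measure.restrict_map hdiv ht,
    Measure.restrict_restrict (hdiv ht), inter_eq_right.mpr hst.subset_preimage]

end scaleMeasure

theorem restrict_Ioc_multiscaleMeasure (d : ℕ) {κ c : ℝ} (hκ : 1 ≤ κ) (hc : 1 ≤ c)
    (μ : Measure ℝ) :
    (multiscaleMeasure d κ μ).restrict (Ioc 0 c) = μ.restrict (Ioc 0 c) +
      Measure.sum fun i : ℕ => scaleMeasure d (κ ^ (i + 1)) (μ.restrict (Icc 1 κ)) := by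
  have mapsTo_Ioc (i : ℕ) : MapsTo (· / κ ^ (i + 1)) (Icc 1 κ) (Ioc 0 c) := by
    have hle : κ ≤ c * κ ^ (i + 1) :=
      (le_self_pow₀ hκ i.succ_ne_zero).trans (le_mul_of_one_le_left (by positivity) hc)
    exact (mapsTo_div_Ioc (by positivity) hle).mono_left fun r hr => ⟨one_pos.trans_le hr.1, hr.2⟩
  simp only [multiscaleMeasure, Measure.restrict_add, Measure.restrict_sum _ measurableSet_Ioc,
    restrict_scaleMeasure_restrict_of_mapsTo d measurableSet_Ioc (mapsTo_Ioc _)]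

theorem stmt_3_general (d : ℕ) {κ : ℝ} (hκ : 1 ≤ κ) {μ : Measure ℝ} (hμ : μ (Ioo 0 1) = 0)
    (j : ℕ) :
    scaleMeasure d (κ ^ j) ((multiscaleMeasure d κ μ).restrict (Ioc 0 (κ ^ j)))
      = scaleMeasure d (κ ^ j) (μ.restrict (Icc 1 (κ ^ j)))
        + Measure.sum
            (fun k : ℕ => scaleMeasure d (κ ^ (j + 1 + k)) (μ.restrict (Icc 1 κ))) := by
  have scale_mul (k : ℕ) : κ ^ j * κ ^ (k + 1) = κ ^ (j + 1 + k) := by ring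
  rw [restrict_Ioc_multiscaleMeasure d hκ (one_le_pow₀ hκ),
    restrict_Ioc_eq_restrict_Icc one_pos hμ, scaleMeasure_add, scaleMeasure_sum]
  simp only [scaleMeasure_scaleMeasure d (pow_nonneg (zero_le_one.trans hκ) j), scale_mul]

/-- For every integer `j ≥ 1`,
`𝒯_{κ^j}(μ_κ|_{(0,κ^j]}) = 𝒯_{κ^j}(μ|_{[1,κ^j]}) + Σ_{k=j+1}^∞ 𝒯_{κ^k}(μ|_{[1,κ]})`. -/
theorem stmt_3 (d : ℕ) (hd : 2 ≤ d) (κ : ℝ) (hκ : 1 < κ)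
    (μ : Measure ℝ) [IsFiniteMeasure μ] (hμ : μ (Set.Iio 1) = 0)
    (j : ℕ) (hj : 1 ≤ j) :
    scaleMeasure d (κ ^ j) ((multiscaleMeasure d κ μ).restrict (Set.Ioc 0 (κ ^ j)))
      = scaleMeasure d (κ ^ j) (μ.restrict (Set.Icc 1 (κ ^ j)))
        + Measure.sum
            (fun k : ℕ => scaleMeasure d (κ ^ (j + 1 + k)) (μ.restrict (Set.Icc 1 κ))) :=
  stmt_3_general d hκ.le (measure_mono_null (fun _ hr => hr.2) hμ) j
end

section
/- Let d ≥ 2 and let μ be a finite measure on [1,∞). Assume there exists κ_0 > 1 such that for all κ ≥ κ_0, all a ≥ κ, and all r ≥ 1 one has a^d · μ([a r, a κ]) ≤ μ([r, κ]). Then for every κ ≥ κ_0, every integer k ≥ 1, and every s > 0, (𝒯_{κ^k}(μ|_{[κ^k, κ^{k+1}]}))([s,∞)) ≤ (μ|_{[1,κ]})([s,∞)); that is, the measure 𝒯_{κ^k}(μ|_{[κ^k, κ^{k+1}]}) is stochastically dominated by μ|_{[1,κ]}. -/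
open MeasureTheory

/-!
Scaling commutes with restriction: `𝒯_m (μ|_{[m, mκ]}) = (𝒯_m μ)|_{[1, κ]}`. The regularity
hypothesis says that, for `m ≥ κ`, `𝒯_m μ` gives at most the `μ`-mass to each interval `[r, κ]` with
`r ≥ 1`, and these intervals are exactly the traces of the rays `[s, ∞)` on `[1, κ]`.
-/

theorem restrict_Icc_apply_Ici {α : Type*} [LinearOrder α] [TopologicalSpace α]
    [OrderClosedTopology α] [MeasurableSpace α] [OpensMeasurableSpace α]
    (ν : Measure α) (a b s : α) :
    ν.restrict (Set.Icc a b) (Set.Ici s) = ν (Set.Icc (max s a) b) := by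
  rw [Measure.restrict_apply measurableSet_Ici, ← Set.Ici_inter_Iic, ← Set.inter_assoc,
    Set.Ici_inter_Ici, Set.Ici_inter_Iic]

theorem preimage_div_const_Icc₀ {G₀ : Type*} [CommGroupWithZero G₀] [PartialOrder G₀]
    [PosMulReflectLT G₀] (a b : G₀) {c : G₀} (hc : 0 < c) :
    (· / c) ⁻¹' Set.Icc a b = Set.Icc (c * a) (c * b) := by
  ext x
  simp only [Set.mem_preimage, Set.mem_Icc, le_div_iff₀' hc, div_le_iff₀' hc]

section Scaling

variable {m : ℝ} (d : ℕ) (ν : Measure ℝ)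

theorem scaleMeasure_restrict_preimage {A : Set ℝ} (hA : MeasurableSet A) :
    scaleMeasure d m (ν.restrict ((· / m) ⁻¹' A)) = (scaleMeasure d m ν).restrict A := by
  rw [scaleMeasure, scaleMeasure, Measure.restrict_smul,
    Measure.restrict_map (measurable_div_const m) hA]

theorem scaleMeasure_restrict_Icc (hm : 0 < m) (a b : ℝ) :
    scaleMeasure d m (ν.restrict (Set.Icc (m * a) (m * b))) =
      (scaleMeasure d m ν).restrict (Set.Icc a b) := by
  rw [← scaleMeasure_restrict_preimage d ν measurableSet_Icc, preimage_div_const_Icc₀ a b hm]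

theorem scaleMeasure_apply_Icc (hm : 0 < m) (a b : ℝ) :
    scaleMeasure d m ν (Set.Icc a b) =
      ENNReal.ofReal (m ^ d) * ν (Set.Icc (m * a) (m * b)) := by
  rw [scaleMeasure, Measure.smul_apply, smul_eq_mul, ← ENNReal.ofReal_pow hm.le,
    Measure.map_apply (measurable_div_const m) measurableSet_Icc,
    preimage_div_const_Icc₀ a b hm]

end Scaling

theorem stmt_4_general (d : ℕ) (μ : Measure ℝ) {a c κ : ℝ} (ha : 0 < a)
    (hreg : ∀ r ≥ c,
      ENNReal.ofReal (a ^ d) * μ (Set.Icc (a * r) (a * κ)) ≤ μ (Set.Icc r κ)) (s : ℝ) :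
    scaleMeasure d a (μ.restrict (Set.Icc (a * c) (a * κ))) (Set.Ici s)
      ≤ (μ.restrict (Set.Icc c κ)) (Set.Ici s) := by
  rw [scaleMeasure_restrict_Icc d μ ha, restrict_Icc_apply_Ici, restrict_Icc_apply_Ici,
    scaleMeasure_apply_Icc d μ ha]
  exact hreg (max s c) (le_max_right s c)

/-- Under the regularity hypothesis, for every `κ ≥ κ₀`, `k ≥ 1` and `s > 0`,
the measure `𝒯_{κ^k}(μ|_{[κ^k, κ^{k+1}]})` is stochastically dominated by `μ|_{[1,κ]}`. -/
theorem stmt_4 (d : ℕ) (hd : 2 ≤ d)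
    (μ : Measure ℝ) [IsFiniteMeasure μ] (hμ : μ (Set.Iio 1) = 0)
    (κ₀ : ℝ) (hκ₀ : 1 < κ₀)
    (hreg : ∀ κ ≥ κ₀, ∀ a ≥ κ, ∀ r ≥ (1 : ℝ),
      ENNReal.ofReal (a ^ d) * μ (Set.Icc (a * r) (a * κ)) ≤ μ (Set.Icc r κ)) :
    ∀ κ ≥ κ₀, ∀ k : ℕ, 1 ≤ k → ∀ s > (0 : ℝ),
      scaleMeasure d (κ ^ k) (μ.restrict (Set.Icc (κ ^ k) (κ ^ (k + 1)))) (Set.Ici s)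
        ≤ (μ.restrict (Set.Icc 1 κ)) (Set.Ici s) := by
  intro κ hκ k hk s _
  have one_lt_κ : 1 < κ := hκ₀.trans_le hκ
  have κ_le_pow : κ ≤ κ ^ k := le_self_pow₀ one_lt_κ.le (Nat.one_le_iff_ne_zero.mp hk)
  simpa only [mul_one, pow_succ] using
    stmt_4_general d μ (by positivity) (hreg κ hκ (κ ^ k) κ_le_pow) s
end

section
/- Let d ≥ 2, let δ > 0, and let f : [1,∞) → ℝ be a non-increasing measurable function with 0 < inf f ≤ sup f < ∞. Let μ be the measure on ℝ with density f(r) · r^{-(d+1+δ)} · 1_{r ≥ 1} with respect to Lebesgue measure. Then there exists κ_0 > 1 such that for all κ ≥ κ_0, all a ≥ κ, and all r ≥ 1, one has a^d · μ([a r, a κ]) ≤ μ([r, κ]). In particular, any κ_0 ≥ (sup f / inf f)^{1/δ} with κ_0 > 1 works. -/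
open MeasureTheory

/-!
Substituting `x = a y` in `μ([a r, a κ])` produces a factor `a` from Lebesgue measure and a factor
`a ^ (-(d + 1 + δ))` from the power in the density, while `f (a y) ≤ f y` because `a ≥ 1`. Together
with `a ^ d` the powers of `a` multiply to `a ^ (-δ) ≤ 1`, so the inequality holds between the
integrands, and every `κ₀ > 1` works.
-/

open scoped ENNReal Pointwise

section HaarMeasure

variable {E : Type*} [NormedAddCommGroup E] [NormedSpace ℝ E] [FiniteDimensional ℝ E]
  [MeasurableSpace E] [BorelSpace E] (ν : Measure E) [ν.IsAddHaarMeasure] {c : ℝ} {s : Set E}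

theorem setLIntegral_smul_set (hc : c ≠ 0) (hs : MeasurableSet s) (g : E → ℝ≥0∞) :
    ∫⁻ x in c • s, g x ∂ν =
      ∫⁻ x in s, ENNReal.ofReal |c ^ Module.finrank ℝ E| * g (c • x) ∂ν := by
  have hderiv (x : E) (_ : x ∈ s) :
      HasFDerivWithinAt (c • ·) (c • ContinuousLinearMap.id ℝ E) s x :=
    (hasFDerivWithinAt_id x s).const_smul c
  rw [← Set.image_smul, lintegral_image_eq_lintegral_abs_det_fderiv_mul ν hs hderiv
    (smul_right_injective E hc).injOn]
  simp [ContinuousLinearMap.det]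

theorem mul_withDensity_smul_set_le (hc : c ≠ 0) (hs : MeasurableSet s) {C : ℝ≥0∞}
    {ρ : E → ℝ≥0∞}
    (hρ : ∀ x ∈ s, C * (ENNReal.ofReal |c ^ Module.finrank ℝ E| * ρ (c • x)) ≤ ρ x) :
    C * ν.withDensity ρ (c • s) ≤ ν.withDensity ρ s := by
  rw [withDensity_apply _ (hs.const_smul₀ c), withDensity_apply _ hs,
    setLIntegral_smul_set ν hc hs]
  exact (lintegral_const_mul_le _ _).trans (setLIntegral_mono' hs hρ)

end HaarMeasure

theorem rpow_mul_mul_rpow_le {a x p q : ℝ} (ha : 1 ≤ a) (hx : 0 ≤ x) (hpq : p + q ≤ 0) :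
    a ^ p * (a * x) ^ q ≤ x ^ q := by
  have ha₀ : 0 < a := zero_lt_one.trans_le ha
  calc a ^ p * (a * x) ^ q = a ^ (p + q) * x ^ q := by
        rw [Real.mul_rpow ha₀.le hx, ← mul_assoc, ← Real.rpow_add ha₀]
    _ ≤ x ^ q := mul_le_of_le_one_left (Real.rpow_nonneg hx _)
        (Real.rpow_le_one_of_one_le_of_nonpos ha hpq)

theorem stmt_9_general {d δ : ℝ} (hδ : 0 ≤ δ) {f : ℝ → ℝ≥0∞} (hf : AntitoneOn f (Set.Ici 1))
    {μ : Measure ℝ}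
    (hμ : μ = volume.withDensity
      (Set.indicator (Set.Ici 1) fun r => f r * ENNReal.ofReal (r ^ (-(d + 1 + δ)))))
    {a : ℝ} (ha : 1 ≤ a) {s : Set ℝ} (hs : MeasurableSet s) (hs₁ : s ⊆ Set.Ici 1) :
    ENNReal.ofReal (a ^ d) * μ (a • s) ≤ μ s := by
  subst hμ
  have ha₀ : 0 < a := zero_lt_one.trans_le ha
  refine mul_withDensity_smul_set_le volume ha₀.ne' hs fun x hxs => ?_
  have hx : 1 ≤ x := hs₁ hxs
  have hx_le : x ≤ a * x := le_mul_of_one_le_left (zero_le_one.trans hx) ha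
  have hax : 1 ≤ a * x := hx.trans hx_le
  have hpow : ENNReal.ofReal (a ^ d) *
      (ENNReal.ofReal a * ENNReal.ofReal ((a * x) ^ (-(d + 1 + δ)))) ≤
      ENNReal.ofReal (x ^ (-(d + 1 + δ))) := by
    rw [← ENNReal.ofReal_mul ha₀.le, ← ENNReal.ofReal_mul (Real.rpow_nonneg ha₀.le d),
      ← mul_assoc, ← Real.rpow_add_one ha₀.ne']
    exact ENNReal.ofReal_le_ofReal <|
      rpow_mul_mul_rpow_le ha (zero_le_one.trans hx) (by linarith)
  rw [Module.finrank_self, pow_one, abs_of_pos ha₀, smul_eq_mul,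
    Set.indicator_of_mem (Set.mem_Ici.2 hax), Set.indicator_of_mem (Set.mem_Ici.2 hx)]
  calc ENNReal.ofReal (a ^ d) *
        (ENNReal.ofReal a * (f (a * x) * ENNReal.ofReal ((a * x) ^ (-(d + 1 + δ)))))
      = f (a * x) * (ENNReal.ofReal (a ^ d) *
          (ENNReal.ofReal a * ENNReal.ofReal ((a * x) ^ (-(d + 1 + δ))))) := by ring
    _ ≤ f x * ENNReal.ofReal (x ^ (-(d + 1 + δ))) := mul_le_mul' (hf hx hax hx_le) hpow

/-- The measure with density `f(r) r^{-(d+1+δ)} 1_{r ≥ 1}` with respect to Lebesgue measure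
satisfies the regularity hypothesis; in particular one can take any
`κ₀ > 1` with `κ₀ ≥ (sup f / inf f)^{1/δ}`. -/
theorem stmt_9 (d : ℕ) (hd : 2 ≤ d) (δ : ℝ) (hδ : 0 < δ)
    (f : ℝ → ℝ) (hf_meas : Measurable f) (hf_anti : AntitoneOn f (Set.Ici 1))
    (hf_inf : 0 < sInf (f '' Set.Ici 1)) (hf_bdd : BddAbove (f '' Set.Ici 1))
    (μ : Measure ℝ)
    (hμ : μ = volume.withDensity
      (Set.indicator (Set.Ici 1)
        (fun r : ℝ => ENNReal.ofReal (f r * r ^ (-(d + 1 + δ : ℝ)))))) :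
    (∃ κ₀ : ℝ, 1 < κ₀ ∧ ∀ κ ≥ κ₀, ∀ a ≥ κ, ∀ r ≥ (1 : ℝ),
        ENNReal.ofReal (a ^ d) * μ (Set.Icc (a * r) (a * κ)) ≤ μ (Set.Icc r κ))
      ∧ ∀ κ₀ : ℝ, 1 < κ₀ →
          (sSup (f '' Set.Ici 1) / sInf (f '' Set.Ici 1)) ^ (1 / δ) ≤ κ₀ →
          ∀ κ ≥ κ₀, ∀ a ≥ κ, ∀ r ≥ (1 : ℝ),
            ENNReal.ofReal (a ^ d) * μ (Set.Icc (a * r) (a * κ)) ≤ μ (Set.Icc r κ) := by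
  have hμ_factored : μ = volume.withDensity (Set.indicator (Set.Ici 1) fun r =>
      ENNReal.ofReal (f r) * ENNReal.ofReal (r ^ (-(d + 1 + δ)))) := by
    rw [hμ, Set.indicator_congr fun r hr => ENNReal.ofReal_mul'
      (Real.rpow_nonneg (zero_le_one.trans (Set.mem_Ici.1 hr)) _)]
  have scaling (κ₀ : ℝ) (hκ₀ : 1 < κ₀) : ∀ κ ≥ κ₀, ∀ a ≥ κ, ∀ r ≥ (1 : ℝ),
      ENNReal.ofReal (a ^ d) * μ (Set.Icc (a * r) (a * κ)) ≤ μ (Set.Icc r κ) := by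
    intro κ hκ a ha r hr
    have ha₁ : 1 ≤ a := hκ₀.le.trans (hκ.le.trans ha)
    rw [← Real.rpow_natCast, ← LinearOrderedField.smul_Icc (zero_lt_one.trans_le ha₁)]
    exact stmt_9_general hδ.le (ENNReal.ofReal_mono.comp_antitoneOn hf_anti) hμ_factored ha₁
      measurableSet_Icc (Set.Icc_subset_Ici_self.trans (Set.Ici_subset_Ici.2 hr))
  exact ⟨⟨2, one_lt_two, scaling 2 one_lt_two⟩, fun κ₀ hκ₀ _ => scaling κ₀ hκ₀⟩
end
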